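/- arXiv:math/0407244 — 5 statements merged into one kernel-verified Lean document; each statement's English description precedes it below -/
import Mathlib

section
/- Let B be the standard bilinear form of signature (3,2) on ℝ⁵. Let f and f̂₂ be 2-dimensional totally isotropic subspaces such that s₂ := f ∩ f̂₂ is 1-dimensional. Let V⁰ ≠ V¹ be 4-dimensional subspaces with f + f̂₂ ⊆ V⁰ ∩ V¹, and let ν₀, ν₁ be vectors with B(ν_i, ν_i) = 1 and ν_i ∈ (V^i)^⊥ for i = 0, 1, where B restricted to each V^i is nondegenerate. Then ε := B(ν₀, ν₁) satisfies ε² = 1, and σ₂ := ν₁ − ε ν₀ is a nonzero element of s₂. -/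
/-- The standard symmetric bilinear form of signature `(p, n - p)` on `ℝⁿ`;
here we use `n = 5`, `p = 3`, i.e. signature `(3,2)`. -/
noncomputable def bform (n p : ℕ) (x y : Fin n → ℝ) : ℝ :=
  ∑ i : Fin n, (if (i : ℕ) < p then x i * y i else -(x i * y i))

/-!
Suppose `dim E = dim f + dim g + 1` and put `W = f + g`, `s = f ∩ g`. Both `ν₀` and `ν₁` are
orthogonal to `W`, and `ν₀ ∉ W` because `ν₀` is not isotropic. Hence `(W + K ν₀)^⊥` has dimension
`dim E - dim W - 1 = dim s`; it contains `s` because `f` and `g` are totally isotropic, so it equals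
`s`. The vector `σ = ν₁ - ε ν₀` is orthogonal to `W` and to `ν₀`, so it lies in `s`, and
`0 = B(ν₁, σ) = 1 - ε²`. If `σ` vanished, `ν₁ = ε ν₀` would be orthogonal to `V₀ + V₁ = E`.
-/

open Module Submodule

section CommSemiring

variable {R M : Type*} [CommSemiring R] [AddCommMonoid M] [Module R M]
  {B : LinearMap.BilinForm R M}

theorem mem_orthogonal_iff_le_ker_flip {W : Submodule R M} {x : M} :
    x ∈ B.orthogonal W ↔ W ≤ LinearMap.ker (B.flip x) :=
  Iff.rfl

theorem inf_le_orthogonal_sup {f g : Submodule R M} (hf : f ≤ B.orthogonal f)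
    (hg : g ≤ B.orthogonal g) : f ⊓ g ≤ B.orthogonal (f ⊔ g) :=
  fun _ hx ↦ mem_orthogonal_iff_le_ker_flip.2 (sup_le (hf hx.1) (hg hx.2))

theorem mem_orthogonal_sup_span_singleton {W : Submodule R M} {ν x : M} :
    x ∈ B.orthogonal (W ⊔ R ∙ ν) ↔ x ∈ B.orthogonal W ∧ B ν x = 0 := by
  simp only [mem_orthogonal_iff_le_ker_flip, sup_le_iff, span_singleton_le_iff_mem,
    LinearMap.mem_ker, LinearMap.BilinForm.flip_apply]

end CommSemiring

section CommRing

variable {R M : Type*} [CommRing R] [AddCommGroup M] [Module R M] {B : LinearMap.BilinForm R M}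

theorem sub_smul_mem_orthogonal_sup_span_singleton (hB : B.IsSymm) {W : Submodule R M} {ν₀ ν₁ : M}
    (hν₀ : B ν₀ ν₀ = 1) (h₀ : W ≤ LinearMap.ker (B ν₀)) (h₁ : W ≤ LinearMap.ker (B ν₁)) :
    ν₁ - B ν₀ ν₁ • ν₀ ∈ B.orthogonal (W ⊔ R ∙ ν₀) := by
  refine mem_orthogonal_sup_span_singleton.2 ⟨fun w hw ↦ ?_, ?_⟩
  · have hw₀ : B ν₀ w = 0 := h₀ hw
    have hw₁ : B ν₁ w = 0 := h₁ hw
    rw [hB.eq w, LinearMap.BilinForm.sub_left, LinearMap.BilinForm.smul_left, hw₀, hw₁, mul_zero,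
      sub_zero]
  · rw [map_sub, map_smul, hν₀, smul_eq_mul, mul_one, sub_self]

end CommRing

section DivisionRing

variable {K E : Type*} [DivisionRing K] [AddCommGroup E] [Module K E] [FiniteDimensional K E]

theorem isCoatom_of_finrank_add_one_eq {V : Submodule K E}
    (hV : finrank K V + 1 = finrank K E) : IsCoatom V := by
  refine ⟨fun h ↦ ?_, fun W hW ↦ eq_top_of_finrank_eq ?_⟩
  · rw [h, finrank_top] at hV
    lia
  · have := finrank_lt_finrank_of_lt hW
    have := W.finrank_le
    lia

theorem sup_eq_top_of_finrank_add_one_eq {V₀ V₁ : Submodule K E}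
    (h₀ : finrank K V₀ + 1 = finrank K E) (h₁ : finrank K V₁ + 1 = finrank K E) (hne : V₀ ≠ V₁) :
    V₀ ⊔ V₁ = ⊤ :=
  (isCoatom_of_finrank_add_one_eq h₀).sup_eq_top_of_ne (isCoatom_of_finrank_add_one_eq h₁) hne

end DivisionRing

section Field

variable {K E : Type*} [Field K] [AddCommGroup E] [Module K E] [FiniteDimensional K E]
  {B : LinearMap.BilinForm K E}

theorem orthogonal_sup_sup_span_singleton_eq_inf (hB : B.Nondegenerate) {f g : Submodule K E}
    (hdim : finrank K f + finrank K g + 1 = finrank K E)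
    (hf : f ≤ B.orthogonal f) (hg : g ≤ B.orthogonal g) {ν : E} (hν : B ν ν ≠ 0)
    (hperp : f ⊔ g ≤ LinearMap.ker (B ν)) :
    B.orthogonal (f ⊔ g ⊔ K ∙ ν) = f ⊓ g := by
  have hν_notMem : ν ∉ f ⊔ g := fun h ↦ hν (hperp h)
  have hle : f ⊓ g ≤ B.orthogonal (f ⊔ g ⊔ K ∙ ν) := fun x hx ↦
    mem_orthogonal_sup_span_singleton.2
      ⟨inf_le_orthogonal_sup hf hg hx, hperp (mem_sup_left hx.1)⟩
  refine (eq_of_le_of_finrank_eq hle ?_).symm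
  have hsup := finrank_sup_add_finrank_inf_eq f g
  rw [LinearMap.BilinForm.finrank_orthogonal hB, finrank_sup_span_singleton hν_notMem]
  lia

theorem stmt_5_general (hB : B.Nondegenerate) (hB_symm : B.IsSymm)
    {f g V₀ V₁ : Submodule K E} (hdim : finrank K f + finrank K g + 1 = finrank K E)
    (hf : f ≤ B.orthogonal f) (hg : g ≤ B.orthogonal g) (hV : V₀ ⊔ V₁ = ⊤)
    (hsub : f ⊔ g ≤ V₀ ⊓ V₁) {ν₀ ν₁ : E} (hν₀ : B ν₀ ν₀ = 1) (hν₁ : B ν₁ ν₁ = 1)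
    (h₀ : V₀ ≤ LinearMap.ker (B ν₀)) (h₁ : V₁ ≤ LinearMap.ker (B ν₁)) :
    B ν₀ ν₁ ^ 2 = 1 ∧ ν₁ - B ν₀ ν₁ • ν₀ ≠ 0 ∧ ν₁ - B ν₀ ν₁ • ν₀ ∈ f ⊓ g := by
  have hW₀ : f ⊔ g ≤ LinearMap.ker (B ν₀) := (hsub.trans inf_le_left).trans h₀
  have hW₁ : f ⊔ g ≤ LinearMap.ker (B ν₁) := (hsub.trans inf_le_right).trans h₁
  have hν₀_ne : B ν₀ ν₀ ≠ 0 := hν₀ ▸ one_ne_zero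
  have hσ_mem : ν₁ - B ν₀ ν₁ • ν₀ ∈ f ⊓ g := by
    rw [← orthogonal_sup_sup_span_singleton_eq_inf hB hdim hf hg hν₀_ne hW₀]
    exact sub_smul_mem_orthogonal_sup_span_singleton hB_symm hν₀ hW₀ hW₁
  refine ⟨?_, fun hσ ↦ ?_, hσ_mem⟩
  · have hν₁σ : B ν₁ (ν₁ - B ν₀ ν₁ • ν₀) = 0 := hW₁ (mem_sup_left hσ_mem.1)
    rw [map_sub, map_smul, hν₁, hB_symm.eq ν₁, smul_eq_mul, sub_eq_zero] at hν₁σ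
    rw [sq, hν₁σ]
  · have h₀' : V₀ ≤ LinearMap.ker (B ν₁) := by
      rw [sub_eq_zero.1 hσ, map_smul]
      exact h₀.trans (LinearMap.ker_le_ker_smul _ _)
    have hν₁_ker : ν₁ ∈ LinearMap.ker (B ν₁) := sup_le h₀' h₁ (hV ▸ mem_top)
    exact one_ne_zero (hν₁.symm.trans hν₁_ker)

end Field

/-- The form `bform n p` as a bundled bilinear form, given by its Gram matrix
`diag(1, …, 1, -1, …, -1)`, so that the library's theory of orthogonal complements applies. -/
noncomputable def signatureForm (n p : ℕ) : LinearMap.BilinForm ℝ (Fin n → ℝ) :=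
  Matrix.toBilin' (Matrix.diagonal fun i ↦ if (i : ℕ) < p then 1 else -1)

theorem signatureForm_apply (n p : ℕ) (x y : Fin n → ℝ) :
    signatureForm n p x y = bform n p x y := by
  simp only [signatureForm, bform, Matrix.toBilin'_apply', dotProduct, Matrix.mulVec_diagonal]
  refine Finset.sum_congr rfl fun i _ ↦ ?_
  split_ifs <;> ring

theorem signatureForm_isSymm (n p : ℕ) : (signatureForm n p).IsSymm :=
  Matrix.isSymm_toBilin'_iff_isSymm.2 (Matrix.isSymm_diagonal _)

theorem signatureForm_nondegenerate (n p : ℕ) : (signatureForm n p).Nondegenerate := by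
  refine LinearMap.BilinForm.nondegenerate_toBilin'_of_det_ne_zero' _ ?_
  rw [Matrix.det_diagonal, Finset.prod_ne_zero_iff]
  intro i _
  split_ifs <;> norm_num

/-- Lemma 10 of the paper: for unit normals `ν₀, ν₁` of two distinct nondegenerate
4-dimensional subspaces `V⁰ ≠ V¹` of `ℝ^{3,2}` both containing `f + f̂₂`, where `f, f̂₂`
are totally isotropic 2-planes with `s₂ = f ∩ f̂₂` a line, one has
`ε := B(ν₀,ν₁) = ±1` and `σ₂ := ν₁ - ε ν₀` is a nonzero element of `s₂`. -/
theorem stmt_5 (f fh₂ V0 V1 : Submodule ℝ (Fin 5 → ℝ))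
    (hfdim : Module.finrank ℝ f = 2)
    (hfh₂dim : Module.finrank ℝ fh₂ = 2)
    (hfiso : ∀ w ∈ f, ∀ w' ∈ f, bform 5 3 w w' = 0)
    (hfh₂iso : ∀ w ∈ fh₂, ∀ w' ∈ fh₂, bform 5 3 w w' = 0)
    (hs₂ : Module.finrank ℝ (f ⊓ fh₂ : Submodule ℝ (Fin 5 → ℝ)) = 1)
    (hV0dim : Module.finrank ℝ V0 = 4)
    (hV1dim : Module.finrank ℝ V1 = 4)
    (hVne : V0 ≠ V1)
    (hsub : f ⊔ fh₂ ≤ V0 ⊓ V1)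
    (hV0nd : ∀ v ∈ V0, (∀ w ∈ V0, bform 5 3 v w = 0) → v = 0)
    (hV1nd : ∀ v ∈ V1, (∀ w ∈ V1, bform 5 3 v w = 0) → v = 0)
    (ν₀ ν₁ : Fin 5 → ℝ)
    (hν₀unit : bform 5 3 ν₀ ν₀ = 1)
    (hν₁unit : bform 5 3 ν₁ ν₁ = 1)
    (hν₀perp : ∀ w ∈ V0, bform 5 3 ν₀ w = 0)
    (hν₁perp : ∀ w ∈ V1, bform 5 3 ν₁ w = 0) :
    (bform 5 3 ν₀ ν₁) ^ 2 = 1 ∧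
    ν₁ - bform 5 3 ν₀ ν₁ • ν₀ ≠ 0 ∧
    ν₁ - bform 5 3 ν₀ ν₁ • ν₀ ∈ f ⊓ fh₂ := by
  simp only [← signatureForm_apply] at *
  have hV : V0 ⊔ V1 = ⊤ :=
    sup_eq_top_of_finrank_add_one_eq (by simp [hV0dim]) (by simp [hV1dim]) hVne
  exact stmt_5_general (signatureForm_nondegenerate 5 3) (signatureForm_isSymm 5 3)
    (by simp [hfdim, hfh₂dim]) (fun x hx w hw ↦ hfiso w hw x hx)
    (fun x hx w hw ↦ hfh₂iso w hw x hx) hV hsub hν₀unit hν₁unit hν₀perp hν₁perp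
end

section
/- Let V be a real vector space with a symmetric bilinear form B and let f ⊆ V be a totally isotropic subspace. Let ν₀, ν₁, ν₂ ∈ V satisfy B(ν_i, ν_i) = 1 for i = 0, 1, 2, and suppose there are real numbers ε₀, ε₁, ε₂ and vectors σ₀, σ₁, σ₂ ∈ f with ν₁ = ε₂ ν₀ + σ₂, ν₂ = ε₀ ν₁ + σ₀, and ν₀ = ε₁ ν₂ + σ₁. Then ε₀ ε₁ ε₂ = 1. -/
theorem smodEq_of_eq_add {R V : Type*} [Ring R] [AddCommGroup V] [Module R V]
    {f : Submodule R V} {x y s : V} (hs : s ∈ f) (h : x = y + s) : x ≡ y [SMOD f] :=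
  SModEq.sub_mem.mpr (sub_eq_of_eq_add' h ▸ hs)

section IsotropicSubmodule

variable {R V N : Type*} [CommRing R] [IsDomain R] [AddCommGroup V] [Module R V]
  [AddCommGroup N] [Module R N] [Module.IsTorsionFree R N]
  {Q : QuadraticMap R V N} {f : Submodule R V}

theorem eq_zero_of_smul_mem_of_isotropic (hf : ∀ w ∈ f, Q w = 0) {x : V} (hx : Q x ≠ 0) {c : R}
    (hc : c • x ∈ f) : c = 0 := by
  have hQ : (c * c) • Q x = 0 := by rw [← Q.map_smul, hf _ hc]
  exact mul_self_eq_zero.mp ((smul_eq_zero_iff_left hx).mp hQ)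

theorem eq_one_of_smodEq_smul_of_isotropic (hf : ∀ w ∈ f, Q w = 0) {x : V} (hx : Q x ≠ 0) {c : R}
    (hc : x ≡ c • x [SMOD f]) : c = 1 := by
  have hmem : (1 - c) • x ∈ f := by
    rw [sub_smul, one_smul]
    exact SModEq.sub_mem.mp hc
  exact (sub_eq_zero.mp (eq_zero_of_smul_mem_of_isotropic hf hx hmem)).symm

theorem stmt_6_general (hf : ∀ w ∈ f, Q w = 0) {ν₀ ν₁ ν₂ : V} (h₁ : Q ν₁ ≠ 0) {ε₀ ε₁ ε₂ : R}
    (e₂ : ν₁ ≡ ε₂ • ν₀ [SMOD f]) (e₀ : ν₂ ≡ ε₀ • ν₁ [SMOD f]) (e₁ : ν₀ ≡ ε₁ • ν₂ [SMOD f]) :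
    ε₀ * ε₁ * ε₂ = 1 := by
  have cycle : ν₁ ≡ (ε₀ * ε₁ * ε₂) • ν₁ [SMOD f] := calc
    ν₁ ≡ ε₂ • ν₀ [SMOD f] := e₂
    _ ≡ ε₂ • ε₁ • ν₂ [SMOD f] := e₁.smul ε₂
    _ ≡ ε₂ • ε₁ • ε₀ • ν₁ [SMOD f] := (e₀.smul ε₁).smul ε₂
    _ = (ε₀ * ε₁ * ε₂) • ν₁ := by module
  exact eq_one_of_smodEq_smul_of_isotropic hf h₁ cycle

end IsotropicSubmodule

/-- Lemma 11 of the paper: if three "unit normals" `ν₀, ν₁, ν₂` (with `B(νᵢ,νᵢ) = 1`)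
are cyclically related by `ν₁ = ε₂ν₀ + σ₂`, `ν₂ = ε₀ν₁ + σ₀`, `ν₀ = ε₁ν₂ + σ₁` with the
`σᵢ` lying in a totally isotropic subspace `f`, then `ε₀ε₁ε₂ = 1`. -/
theorem stmt_6 (V : Type*) [AddCommGroup V] [Module ℝ V]
    (B : LinearMap.BilinForm ℝ V)
    (hsymm : ∀ x y : V, B x y = B y x)
    (f : Submodule ℝ V)
    (hf : ∀ w ∈ f, ∀ w' ∈ f, B w w' = 0)
    (ν₀ ν₁ ν₂ : V)
    (h₀ : B ν₀ ν₀ = 1) (h₁ : B ν₁ ν₁ = 1) (h₂ : B ν₂ ν₂ = 1)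
    (ε₀ ε₁ ε₂ : ℝ) (σ₀ σ₁ σ₂ : V)
    (hσ₀ : σ₀ ∈ f) (hσ₁ : σ₁ ∈ f) (hσ₂ : σ₂ ∈ f)
    (e₂ : ν₁ = ε₂ • ν₀ + σ₂)
    (e₀ : ν₂ = ε₀ • ν₁ + σ₀)
    (e₁ : ν₀ = ε₁ • ν₂ + σ₁) :
    ε₀ * ε₁ * ε₂ = 1 :=
  stmt_6_general (Q := B.toQuadraticMap) (fun w hw ↦ hf w hw w hw) (h₁.trans_ne one_ne_zero)
    (smodEq_of_eq_add hσ₂ e₂) (smodEq_of_eq_add hσ₀ e₀) (smodEq_of_eq_add hσ₁ e₁)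
end

section
/- Label the six faces of a combinatorial cube by pairs (i, σ) with i ∈ {0,1,2} and σ ∈ {1, −1}, its vertices by triples v ∈ {1,−1}³ (the three faces incident to v being (0, v₀), (1, v₁), (2, v₂)), and its edges by unordered pairs of faces {(i,σ), (j,τ)} with i ≠ j. Let ε assign to each edge a value in {1, −1}, and suppose that for every vertex v ∈ {1,−1}³ one has ε({(0,v₀),(1,v₁)}) · ε({(1,v₁),(2,v₂)}) · ε({(2,v₂),(0,v₀)}) = 1. Then there exists δ : {0,1,2} × {1,−1} → {1,−1} such that for every edge, ε({(i,σ),(j,τ)}) = δ(i,σ) · δ(j,τ). -/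
/-!
Fix a base vertex `o` and let the potential at `a` be the value of the cocycle along a path of
length two from `a` to `o`. If `a` is adjacent to `o`, the triangle condition says that every such
path has the value of the edge from `a` to `o`. Otherwise `a` and `o` have the same neighbours, and
two midpoints are either adjacent or both adjacent to a third one, so the triangle condition again
gives independence of the midpoint. The octahedron dual to the cube is the complete multipartite
graph whose three parts are the pairs of opposite faces.
-/

variable {V M : Type*}

/-- A multiplicative 1-cocycle on the clique complex of the graph `G`, with `ε a b` the value on
the edge oriented from `a` to `b`. Values of `ε` at non-adjacent pairs are unconstrained. -/
structure IsEdgeCocycle [Monoid M] (G : SimpleGraph V) (ε : V → V → M) : Prop where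
  mul_swap {a b : V} : G.Adj a b → ε a b * ε b a = 1
  mul_triangle {a b c : V} :
    G.Adj a b → G.Adj b c → G.Adj c a → ε a b * ε b c * ε c a = 1

/-- `ε` is the multiplicative coboundary on the edges of `G` of a vertex potential `δ`, which takes
values in the units of `M`. -/
def IsEdgeCoboundary [Monoid M] (G : SimpleGraph V) (ε : V → V → M) : Prop :=
  ∃ δ : V → Mˣ, ∀ a b, G.Adj a b → ε a b = δ a * ↑(δ b)⁻¹

section CompleteMultipartite

variable {G : SimpleGraph V}

theorem adj_or_adj_of_isCompleteMultipartite (hG : G.IsCompleteMultipartite) {b c : V}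
    (hbc : G.Adj b c) (a : V) : G.Adj a b ∨ G.Adj a c := by
  by_contra! h
  exact hG.trans b a c (fun hba ↦ h.1 hba.symm) h.2 hbc

theorem exists_common_adj_of_isCompleteMultipartite (hG : G.IsCompleteMultipartite)
    (hG₃ : ¬ G.CliqueFree 3) (a b : V) : ∃ c, G.Adj a c ∧ G.Adj b c := by
  classical
  obtain ⟨s, hs⟩ : ∃ s, G.IsNClique 3 s := not_forall_not.mp hG₃
  obtain ⟨p, q, r, hpq, hpr, hqr, -⟩ := SimpleGraph.is3Clique_iff.mp hs
  have hadj {x y : V} (hxy : G.Adj x y) (z : V) : G.Adj z x ∨ G.Adj z y :=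
    adj_or_adj_of_isCompleteMultipartite hG hxy z
  -- Each of `a` and `b` fails to be adjacent to at most one of `p`, `q`, `r`.
  grind [hadj hpq a, hadj hpr a, hadj hqr a, hadj hpq b, hadj hpr b, hadj hqr b]

end CompleteMultipartite

namespace IsEdgeCocycle

variable [Monoid M] {G : SimpleGraph V} {ε : V → V → M} {a b c o : V}

theorem isUnit (hε : IsEdgeCocycle G ε) (hab : G.Adj a b) : IsUnit (ε a b) :=
  ⟨⟨ε a b, ε b a, hε.mul_swap hab, hε.mul_swap hab.symm⟩, rfl⟩

theorem mul_eq (hε : IsEdgeCocycle G ε) (hab : G.Adj a b) (hbc : G.Adj b c)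
    (hac : G.Adj a c) : ε a b * ε b c = ε a c :=
  calc ε a b * ε b c = ε a b * ε b c * (ε c a * ε a c) := by
        rw [hε.mul_swap hac.symm, mul_one]
    _ = ε a b * ε b c * ε c a * ε a c := (mul_assoc _ _ _).symm
    _ = ε a c := by rw [hε.mul_triangle hab hbc hac.symm, one_mul]

theorem mul_eq_mul_of_adj (hε : IsEdgeCocycle G ε) (hab : G.Adj a b) (hac : G.Adj a c)
    (hbo : G.Adj b o) (hco : G.Adj c o) (hbc : G.Adj b c) :
    ε a b * ε b o = ε a c * ε c o := by
  rw [← hε.mul_eq hab hbc hac, mul_assoc, hε.mul_eq hbc hco hbo]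

theorem mul_eq_mul_of_isCompleteMultipartite (hε : IsEdgeCocycle G ε)
    (hG : G.IsCompleteMultipartite) (hG₃ : ¬ G.CliqueFree 3) (hab : G.Adj a b) (hac : G.Adj a c)
    (hbo : G.Adj b o) (hco : G.Adj c o) : ε a b * ε b o = ε a c * ε c o := by
  by_cases hao : G.Adj a o
  · rw [hε.mul_eq hab hbo hao, hε.mul_eq hac hco hao]
  by_cases hbc : G.Adj b c
  · exact hε.mul_eq_mul_of_adj hab hac hbo hco hbc
  obtain ⟨d, hbd, hod⟩ := exists_common_adj_of_isCompleteMultipartite hG hG₃ b o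
  have hcd : G.Adj c d :=
    (adj_or_adj_of_isCompleteMultipartite hG hbd c).resolve_left fun h ↦ hbc h.symm
  have had : G.Adj a d := (adj_or_adj_of_isCompleteMultipartite hG hod a).resolve_left hao
  calc ε a b * ε b o = ε a d * ε d o := hε.mul_eq_mul_of_adj hab had hbo hod.symm hbd
    _ = ε a c * ε c o := hε.mul_eq_mul_of_adj had hac hod.symm hco hcd.symm

theorem exists_potential (hε : IsEdgeCocycle G ε) (hG : G.IsCompleteMultipartite)
    (hG₃ : ¬ G.CliqueFree 3) (o : V) :
    ∃ δ : V → Mˣ, ∀ a b, G.Adj a b → G.Adj b o → (δ a : M) = ε a b * ε b o := by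
  have (a : V) : ∃ u : Mˣ, ∀ b, G.Adj a b → G.Adj b o → (u : M) = ε a b * ε b o := by
    obtain ⟨c, hac, hoc⟩ := exists_common_adj_of_isCompleteMultipartite hG hG₃ a o
    obtain ⟨u, hu⟩ := (hε.isUnit hac).mul (hε.isUnit hoc.symm)
    exact ⟨u, fun b hab hbo ↦
      hu.trans (hε.mul_eq_mul_of_isCompleteMultipartite hG hG₃ hac hab hoc.symm hbo)⟩
  choose δ hδ using this
  exact ⟨δ, hδ⟩

end IsEdgeCocycle

theorem stmt_7_general [Monoid M] {G : SimpleGraph V} (hG : G.IsCompleteMultipartite)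
    (hG₃ : ¬ G.CliqueFree 3) {ε : V → V → M} (hε : IsEdgeCocycle G ε) :
    IsEdgeCoboundary G ε := by
  rcases isEmpty_or_nonempty V with _ | ⟨⟨o⟩⟩
  · exact ⟨1, isEmptyElim⟩
  obtain ⟨δ, hδ⟩ := hε.exists_potential hG hG₃ o
  refine ⟨δ, fun a b hab ↦ ?_⟩
  rw [Units.eq_mul_inv_iff_mul_eq]
  by_cases hbo : G.Adj b o
  · obtain ⟨c, hbc, hoc⟩ := exists_common_adj_of_isCompleteMultipartite hG hG₃ b o
    rw [hδ a b hab hbo, hδ b c hbc hoc.symm, hε.mul_eq hbc hoc.symm hbo]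
  · have hoa : G.Adj o a :=
      (adj_or_adj_of_isCompleteMultipartite hG hab o).resolve_right fun h ↦ hbo h.symm
    obtain ⟨c, hac, hoc⟩ := exists_common_adj_of_isCompleteMultipartite hG hG₃ a o
    rw [hδ b a hab.symm hoa.symm, hδ a c hac hoc.symm, hε.mul_eq hac hoc.symm hoa.symm,
      ← mul_assoc, hε.mul_swap hab, one_mul]

/-- The adjacency graph of faces `(i, σ)`, where `i` is the axis and two faces are adjacent when
their axes differ. For `α = Bool` it is the 1-skeleton of the octahedron dual to the cube. -/
def faceGraph (α : Type*) : SimpleGraph (Fin 3 × α) := SimpleGraph.comap Prod.fst ⊤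

namespace faceGraph

variable {α : Type*}

@[simp]
theorem adj_iff {a b : Fin 3 × α} : (faceGraph α).Adj a b ↔ a.1 ≠ b.1 := Iff.rfl

theorem isCompleteMultipartite : (faceGraph α).IsCompleteMultipartite :=
  ⟨by simp_all⟩

theorem not_cliqueFree_three [Nonempty α] : ¬ (faceGraph α).CliqueFree 3 := by
  classical
  obtain ⟨x⟩ := ‹Nonempty α›
  refine fun h ↦ h {(0, x), (1, x), (2, x)} ?_
  simp [SimpleGraph.is3Clique_triple_iff]

theorem isEdgeCocycle [CommMonoid M] {ε : Fin 3 × α → Fin 3 × α → M}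
    (hsymm : ∀ a b, ε a b = ε b a)
    (hsq : ∀ a b : Fin 3 × α, a.1 ≠ b.1 → ε a b * ε a b = 1)
    (hvertex : ∀ v : Fin 3 → α,
      ε (0, v 0) (1, v 1) * ε (1, v 1) (2, v 2) * ε (2, v 2) (0, v 0) = 1) :
    IsEdgeCocycle (faceGraph α) ε where
  mul_swap {a b} hab := by rw [hsymm b a, hsq a b hab]
  mul_triangle {a b c} hab hbc hca := by
    obtain ⟨⟨i, x⟩, ⟨j, y⟩, ⟨k, z⟩⟩ := a, b, c
    simp only [adj_iff] at hab hbc hca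
    obtain ⟨v, rfl, rfl, rfl⟩ : ∃ v : Fin 3 → α, v i = x ∧ v j = y ∧ v k = z :=
      ⟨Function.update (Function.update (fun _ ↦ z) j y) i x, by simp_all [Ne.symm]⟩
    have hv := hvertex v
    -- By symmetry of `ε`, the product is the same for all six orders of the three axes.
    have horder : (i = 0 ∧ j = 1 ∧ k = 2) ∨ (i = 0 ∧ j = 2 ∧ k = 1) ∨
        (i = 1 ∧ j = 0 ∧ k = 2) ∨ (i = 1 ∧ j = 2 ∧ k = 0) ∨
        (i = 2 ∧ j = 0 ∧ k = 1) ∨ (i = 2 ∧ j = 1 ∧ k = 0) := by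
      omega
    grind

end faceGraph

/-- Lemma 12 of the paper, combinatorial form.  Faces of the cube are pairs
`(i, σ) : Fin 3 × Bool`; vertices are `v : Fin 3 → Bool` (the three incident faces
being `(0, v 0), (1, v 1), (2, v 2)`); and `ε` assigns to each unordered pair of faces
`{(i,σ), (j,τ)}` with `i ≠ j` (an edge) a sign `±1`.  If the product of `ε` over the
three edges at each vertex is `1`, then `ε` is a coboundary: `ε = δ(i,σ)·δ(j,τ)` for
some signs `δ` attached to the faces. -/
theorem stmt_7 (ε : (Fin 3 × Bool) → (Fin 3 × Bool) → ℤ)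
    (hsymm : ∀ a b : Fin 3 × Bool, ε a b = ε b a)
    (hval : ∀ (i j : Fin 3) (σ τ : Bool), i ≠ j →
      ε (i, σ) (j, τ) = 1 ∨ ε (i, σ) (j, τ) = -1)
    (hcocycle : ∀ v : Fin 3 → Bool,
      ε (0, v 0) (1, v 1) * ε (1, v 1) (2, v 2) * ε (2, v 2) (0, v 0) = 1) :
    ∃ δ : Fin 3 × Bool → ℤ, (∀ a, δ a = 1 ∨ δ a = -1) ∧
      ∀ (i j : Fin 3) (σ τ : Bool), i ≠ j →
        ε (i, σ) (j, τ) = δ (i, σ) * δ (j, τ) := by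
  have hsq (a b : Fin 3 × Bool) (hab : a.1 ≠ b.1) : ε a b * ε a b = 1 := by
    rcases hval a.1 b.1 a.2 b.2 hab with h | h <;> simp [h]
  obtain ⟨δ, hδ⟩ := stmt_7_general faceGraph.isCompleteMultipartite
    faceGraph.not_cliqueFree_three (faceGraph.isEdgeCocycle hsymm hsq hcocycle)
  exact ⟨fun a ↦ δ a, fun a ↦ Int.isUnit_iff.mp (δ a).isUnit, fun i j σ τ hij ↦ by
    simpa only [Int.units_inv_eq_self] using hδ (i, σ) (j, τ) hij⟩
end

section
/- Let E be a finite-dimensional real inner product space, λ ∈ ℝ, and let A, Â, r : E → E be linear maps with r bijective. Assume: (i) A is symmetric, ⟨Ax, y⟩ = ⟨x, Ay⟩ for all x, y; (ii) ⟨rÂx, ry⟩ = ⟨rx, rÂy⟩ for all x, y; (iii) r ∘ (Â + λ·id) = A + λ·id. If moreover r is symmetric, ⟨rx, y⟩ = ⟨x, ry⟩ for all x, y, then A and Â commute: A ∘ Â = Â ∘ A. -/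
open RealInnerProductSpace

/-! With `C = Â + l`, the relation reads `r C = A + l`. Since `r` and `r C` are self-adjoint and `C`
is symmetric for the form pulled back along `r`, the form takes the same value on `(x, (r C) r y)`
and `(x, r (r C) y)`, so `r` commutes with `r C`. Injectivity lets us cancel `r` on the left: `r`
commutes with `C`, hence with `Â`, and therefore `A = r (Â + l) - l` commutes with `Â`. -/

section SelfAdjoint

variable {R M N : Type*} [CommRing R] [AddCommGroup M] [Module R M] [AddCommGroup N] [Module R N]
  {I : R →+* R} {B : M →ₗ[R] M →ₛₗ[I] N}

theorem isSelfAdjoint_add_algebraMap {f : Module.End R M} (hf : B.IsSelfAdjoint f) {l : R}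
    (hl : I l = l) : B.IsSelfAdjoint (f + algebraMap R (Module.End R M) l) := fun x y ↦ by
  change B (f x + l • x) y = B x (f y + l • y)
  rw [LinearMap.map_add₂, LinearMap.map_smul₂, map_add, LinearMap.map_smulₛₗ, hl, hf x y]

theorem commute_of_isSelfAdjoint_of_apply_apply_comm (hB : B.SeparatingRight)
    {f g : Module.End R M} (hf : B.IsSelfAdjoint f) (hg : B.IsSelfAdjoint g)
    (hfg : ∀ x y, B (f x) (g y) = B (g x) (f y)) : Commute f g := by
  refine LinearMap.ext fun y ↦ sub_eq_zero.mp <| hB _ fun x ↦ ?_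
  rw [map_sub, sub_eq_zero]
  calc
    B x (f (g y)) = B (f x) (g y) := (hf x (g y)).symm
    _ = B (g x) (f y) := hfg x y
    _ = B x (g (f y)) := hg x (f y)

theorem commute_of_isSelfAdjoint_pullback (hB : B.SeparatingRight) {r C : Module.End R M}
    (hr : Function.Injective r) (hr_self : B.IsSelfAdjoint r) (hrC : B.IsSelfAdjoint (r * C))
    (hC : (B.compl₂ r ∘ₗ r).IsSelfAdjoint C) : Commute r C := by
  have hr_regular : IsLeftRegular r := fun _ _ ↦ (LinearMap.cancel_left hr).mp
  exact hr_regular.commute_mul_left_iff.mp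
    (commute_of_isSelfAdjoint_of_apply_apply_comm hB hrC hr_self hC)

theorem stmt_9_general (hB : B.SeparatingRight) {l : R} (hl : I l = l) {A Ah r : Module.End R M}
    (hr : Function.Injective r) (hA : B.IsSelfAdjoint A)
    (hAh : (B.compl₂ r ∘ₗ r).IsSelfAdjoint Ah)
    (hrel : r * (Ah + algebraMap R (Module.End R M) l) = A + algebraMap R (Module.End R M) l)
    (hr_self : B.IsSelfAdjoint r) : Commute A Ah := by
  set L := algebraMap R (Module.End R M) l
  have hL : ∀ f, Commute L f := Algebra.commutes l
  have hrC : Commute r (Ah + L) := commute_of_isSelfAdjoint_pullback hB hr hr_self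
    (hrel ▸ isSelfAdjoint_add_algebraMap hA hl) (isSelfAdjoint_add_algebraMap hAh hl)
  have hrAh : Commute r Ah := by
    simpa only [add_sub_cancel_right] using hrC.sub_right (hL r).symm
  rw [eq_sub_of_add_eq hrel.symm]
  exact (hrAh.mul_left ((Commute.refl Ah).add_left (hL Ah))).sub_left (hL Ah)

end SelfAdjoint

/-- Forward direction of Proposition 6 of the paper (pointwise form): with `A`
symmetric, `Â` symmetric for `⟨r·, r·⟩`, `r` invertible and `r ∘ (Â + λ) = A + λ`,
if `r` is symmetric then the shape operators commute: `A ∘ Â = Â ∘ A`. -/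
theorem stmt_9 {E : Type*} [NormedAddCommGroup E] [InnerProductSpace ℝ E]
    [FiniteDimensional ℝ E] (l : ℝ) (A Ah r : E →ₗ[ℝ] E)
    (hr : Function.Bijective r)
    (hA : ∀ x y : E, ⟪A x, y⟫ = ⟪x, A y⟫)
    (hAh : ∀ x y : E, ⟪r (Ah x), r y⟫ = ⟪r x, r (Ah y)⟫)
    (hrel : ∀ x : E, r (Ah x + l • x) = A x + l • x)
    (hrsymm : ∀ x y : E, ⟪r x, y⟫ = ⟪x, r y⟫) :
    A ∘ₗ Ah = Ah ∘ₗ A := by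
  have hB : (innerₗ E).SeparatingRight := fun y hy ↦ inner_self_eq_zero.mp (hy y)
  exact stmt_9_general hB (RingHom.id_apply l) hr.injective hA hAh (LinearMap.ext hrel) hrsymm
end

section
/- Let E be a finite-dimensional real inner product space, λ ∈ ℝ, and let A, Â, r : E → E be linear maps with r bijective. Assume: (i) A is symmetric, ⟨Ax, y⟩ = ⟨x, Ay⟩ for all x, y; (ii) ⟨rÂx, ry⟩ = ⟨rx, rÂy⟩ for all x, y; (iii) r ∘ (Â + λ·id) = A + λ·id. If A ∘ Â = Â ∘ A and A + λ·id is bijective, then r is symmetric: ⟨rx, y⟩ = ⟨x, ry⟩ for all x, y. -/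
/-!
Write `B = A + l` and `C = Ah + l`, so that `r C = B`, and `B` is symmetric and commutes with `C`.
The symmetry of `C` for the pulled-back form `⟪r ·, r ·⟫` reads `⟪B x, r y⟫ = ⟪r x, B y⟫`.
Since `B` is onto and symmetric it is injective, which by this identity makes `r` injective; hence
`C` is onto, and `r B C = r C B = B B = B r C` shows that `r` commutes with `B`. Therefore
`⟪r x, B y⟫ = ⟪B x, r y⟫ = ⟪x, B (r y)⟫ = ⟪x, r (B y)⟫`, and every vector is of the form `B y`.
-/

open RealInnerProductSpace

open Function

theorem commute_of_mul_eq_of_isRightRegular {S : Type*} [Semigroup S] {b c r : S}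
    (hc : IsRightRegular c) (hrc : r * c = b) (hbc : Commute b c) : Commute r b :=
  hc <| calc
    r * b * c = r * c * b := by rw [mul_assoc, hbc.eq, mul_assoc]
    _ = b * r * c := by rw [hrc, mul_assoc, hrc]

theorem isRightRegular_of_surjective {R M : Type*} [Semiring R] [AddCommMonoid M] [Module R M]
    {f : Module.End R M} (hf : Surjective f) : IsRightRegular f :=
  hf.injective_linearMapComp_right

section BilinearMap

variable {R M N : Type*} [CommRing R] [AddCommGroup M] [Module R M] [AddCommGroup N] [Module R N]
  {φ : M →ₗ[R] M →ₗ[R] N} {B C f r : Module.End R M}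

theorem isSelfAdjoint_add_smul_one (hf : φ.IsSelfAdjoint f) (c : R) :
    φ.IsSelfAdjoint (f + c • 1 : Module.End R M) :=
  hf.add (LinearMap.isAdjointPair_one.smul c)

theorem injective_of_isSelfAdjoint_of_surjective (hφ : φ.SeparatingLeft)
    (hf : φ.IsSelfAdjoint f) (hsurj : Surjective f) : Injective f := by
  refine (injective_iff_map_eq_zero f).mpr fun x hx => hφ x (hsurj.forall.mpr fun y => ?_)
  rw [← hf x y, hx, map_zero, LinearMap.zero_apply]

theorem injective_of_isSelfAdjoint_compl₁₂ (hφ : φ.SeparatingLeft)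
    (hC : (φ.compl₁₂ r r).IsSelfAdjoint C) (hr : Surjective r) (hinj : Injective (r * C)) :
    Injective r := by
  refine (injective_iff_map_eq_zero r).mpr fun x hx => (map_eq_zero_iff (r * C) hinj).mp ?_
  refine hφ _ (hr.forall.mpr fun y => ?_)
  calc
    φ (r (C x)) (r y) = φ (r x) (r (C y)) := hC x y
    _ = 0 := by rw [hx, map_zero, LinearMap.zero_apply]

theorem isSelfAdjoint_of_commute (hB : φ.IsSelfAdjoint B) (hsurj : Surjective B)
    (hrB : Commute r B) (h : ∀ x y, φ (B x) (r y) = φ (r x) (B y)) : φ.IsSelfAdjoint r :=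
  fun x => hsurj.forall.mpr fun y => calc
    φ (r x) (B y) = φ (B x) (r y) := (h x y).symm
    _ = φ x (B (r y)) := hB x (r y)
    _ = φ x (r (B y)) := congrArg (φ x) (LinearMap.congr_fun hrB.eq y).symm

theorem isSelfAdjoint_of_mul_eq (hφ : φ.SeparatingLeft) (hB : φ.IsSelfAdjoint B)
    (hC : (φ.compl₁₂ r r).IsSelfAdjoint C) (hrC : r * C = B) (hBC : Commute B C)
    (hsurj : Surjective B) : φ.IsSelfAdjoint r := by
  have hB_inj : Injective B := injective_of_isSelfAdjoint_of_surjective hφ hB hsurj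
  subst hrC
  have hrC_surj : Surjective (r ∘ C) := hsurj
  have hr_surj : Surjective r := hrC_surj.of_comp
  have hr_inj : Injective r := injective_of_isSelfAdjoint_compl₁₂ hφ hC hr_surj hB_inj
  have hC_surj : Surjective C := hrC_surj.of_comp_left hr_inj
  have hrB : Commute r (r * C) :=
    commute_of_mul_eq_of_isRightRegular (isRightRegular_of_surjective hC_surj) rfl hBC
  exact isSelfAdjoint_of_commute hB hsurj hrB hC

theorem stmt_10_general (hφ : φ.SeparatingLeft) (l : R) {A Ah : Module.End R M}
    (hA : φ.IsSelfAdjoint A) (hAh : (φ.compl₁₂ r r).IsSelfAdjoint Ah)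
    (hrel : r * (Ah + l • 1) = A + l • 1) (hcomm : Commute A Ah)
    (hsurj : Surjective (A + l • 1 : Module.End R M)) : φ.IsSelfAdjoint r := by
  have hl (f : Module.End R M) : Commute f (l • 1) := (Commute.one_right f).smul_right l
  have hBC : Commute (A + l • 1) (Ah + l • 1) :=
    (hcomm.add_right (hl A)).add_left ((hl _).symm)
  exact isSelfAdjoint_of_mul_eq hφ (isSelfAdjoint_add_smul_one hA l)
    (isSelfAdjoint_add_smul_one hAh l) hrel hBC hsurj

end BilinearMap

theorem separatingLeft_innerₗ (E : Type*) [NormedAddCommGroup E] [InnerProductSpace ℝ E] :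
    (innerₗ E).SeparatingLeft :=
  fun x hx => inner_self_eq_zero.mp (hx x)

/-- Converse direction of Proposition 6 of the paper (pointwise form): with `A`
symmetric, `Â` symmetric for `⟨r·, r·⟩`, `r` invertible, `r ∘ (Â + λ) = A + λ`,
if `A` and `Â` commute and `A + λ·id` is bijective, then `r` is symmetric. -/
theorem stmt_10 {E : Type*} [NormedAddCommGroup E] [InnerProductSpace ℝ E]
    [FiniteDimensional ℝ E] (l : ℝ) (A Ah r : E →ₗ[ℝ] E)
    (hr : Function.Bijective r)
    (hA : ∀ x y : E, ⟪A x, y⟫ = ⟪x, A y⟫)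
    (hAh : ∀ x y : E, ⟪r (Ah x), r y⟫ = ⟪r x, r (Ah y)⟫)
    (hrel : ∀ x : E, r (Ah x + l • x) = A x + l • x)
    (hcomm : A ∘ₗ Ah = Ah ∘ₗ A)
    (hinv : Function.Bijective (fun x : E => A x + l • x)) :
    ∀ x y : E, ⟪r x, y⟫ = ⟪x, r y⟫ :=
  stmt_10_general (separatingLeft_innerₗ E) l hA hAh (LinearMap.ext hrel) hcomm hinv.2
end
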